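/- arXiv:2603.19506 — 3 statements merged into one kernel-verified Lean document; each statement's English description precedes it below -/
import Mathlib

section
/- Let K ≥ 2 be an integer, α > 1, S ≥ K^α a real number, B ≥ α·log K/(K^α − K), and let k₂, k₁₂ be integers with 2 ≤ k₂ ≤ K and 2 ≤ k₁₂ ≤ K. Then t := k₁₂·(k₂B + log S)/S satisfies k₂B/S ≤ t ≤ k₁₂·B. Moreover, B* := α·log K/(K^α − K) is the supremum over all x ≥ K^α of log x/(x − K), so the condition B ≥ B* is also necessary for the upper bound t ≤ k₁₂·B to hold uniformly over all S ≥ K^α. -/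
/-!
Cross-multiplying, `k₁₂ (k₂ B + log S) / S ≤ k₁₂ B` says exactly that `log S / (S - k₂) ≤ B`.
The left-hand side increases with `k₂`, so the worst case is `k₂ = K`, and there
`log x / (x - K)` is the slope of the chord from the point `(K, 0)` to the graph of `log`.
As `log` is concave and that point lies below its graph, the slope decreases with `x`, so its
supremum is attained at the left endpoint `x = K ^ α`.
-/

open Set

section OrderedField

variable {𝕜 : Type*} [Field 𝕜] [LinearOrder 𝕜] [IsStrictOrderedRing 𝕜]

theorem antitoneOn_div_sub_of_concaveOn {s : Set 𝕜} {f : 𝕜 → 𝕜} {c : 𝕜}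
    (hf : ConcaveOn 𝕜 s f) (hc : c ∈ s) (hfc : 0 ≤ f c) :
    AntitoneOn (fun x ↦ f x / (x - c)) (s ∩ Ioi c) := by
  have hsplit (x : 𝕜) : f x / (x - c) = f c / (x - c) + slope f c x := by
    rw [slope_def_field, ← add_div, add_sub_cancel]
  rintro x ⟨hxs, hcx : c < x⟩ y ⟨hys, hcy : c < y⟩ hxy
  have hslope : slope f c y ≤ slope f c x :=
    hf.slope_anti hc ⟨hxs, hcx.ne'⟩ ⟨hys, hcy.ne'⟩ hxy
  simp only [hsplit]
  exact add_le_add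
    (div_le_div_of_nonneg_left hfc (sub_pos.2 hcx) (sub_le_sub_right hxy c)) hslope

theorem mul_add_div_le_mul_iff {m k B L S : 𝕜} (hm : 0 < m) (hS : 0 < S) (hkS : k < S) :
    m * (k * B + L) / S ≤ m * B ↔ L / (S - k) ≤ B := by
  rw [mul_div_assoc, mul_le_mul_iff_right₀ hm, div_le_iff₀ hS, div_le_iff₀ (sub_pos.2 hkS),
    mul_sub, mul_comm k B, le_sub_iff_add_le']

theorem div_le_mul_add_div {m x y S : 𝕜} (hm : 1 ≤ m) (hx : 0 ≤ x) (hy : 0 ≤ y) (hS : 0 ≤ S) :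
    x / S ≤ m * (x + y) / S := by
  gcongr
  calc
    x ≤ x + y := le_add_of_nonneg_right hy
    _ ≤ m * (x + y) := le_mul_of_one_le_left (add_nonneg hx hy) hm

end OrderedField

theorem antitoneOn_log_div_sub {c : ℝ} (hc : 1 ≤ c) :
    AntitoneOn (fun x ↦ Real.log x / (x - c)) (Ioi c) := by
  have hc₀ : 0 < c := one_pos.trans_le hc
  have hanti := antitoneOn_div_sub_of_concaveOn strictConcaveOn_log_Ioi.concaveOn hc₀
    (Real.log_nonneg hc)
  rwa [inter_eq_right.2 (Ioi_subset_Ioi hc₀.le)] at hanti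

theorem isGreatest_log_div_sub {c a : ℝ} (hc : 1 ≤ c) (hca : c < a) :
    IsGreatest {y : ℝ | ∃ x : ℝ, a ≤ x ∧ y = Real.log x / (x - c)} (Real.log a / (a - c)) := by
  refine ⟨⟨a, le_rfl, rfl⟩, ?_⟩
  rintro _ ⟨x, hax, rfl⟩
  exact antitoneOn_log_div_sub hc hca (hca.trans_le hax) hax

theorem choice_t_bounds_general {K a S B k₂ k₁₂ : ℝ} (hK : 1 ≤ K) (hKa : K < a) (hS : a ≤ S)
    (hB : Real.log a / (a - K) ≤ B) (hk₂ : 0 ≤ k₂) (hk₂K : k₂ ≤ K) (hk₁₂ : 1 ≤ k₁₂) :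
    (k₂ * B / S ≤ k₁₂ * (k₂ * B + Real.log S) / S ∧
      k₁₂ * (k₂ * B + Real.log S) / S ≤ k₁₂ * B) ∧
    IsGreatest {y : ℝ | ∃ x : ℝ, a ≤ x ∧ y = Real.log x / (x - K)} (Real.log a / (a - K)) ∧
    ∀ B' m : ℝ, 0 < m → m * (K * B' + Real.log a) / a ≤ m * B' →
      Real.log a / (a - K) ≤ B' := by
  have ha₀ : 0 < a := by linarith
  have hS₀ : 0 < S := ha₀.trans_le hS
  have hKS : K < S := hKa.trans_le hS
  have hlogS : 0 ≤ Real.log S := Real.log_nonneg (hK.trans hKS.le)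
  have hB₀ : 0 ≤ B :=
    (div_nonneg (Real.log_nonneg (hK.trans hKa.le)) (sub_pos.2 hKa).le).trans hB
  have hgreatest := isGreatest_log_div_sub hK hKa
  refine ⟨⟨div_le_mul_add_div hk₁₂ (mul_nonneg hk₂ hB₀) hlogS hS₀.le, ?_⟩, hgreatest,
    fun B' m hm ↦ (mul_add_div_le_mul_iff hm ha₀ hKa).1⟩
  refine (mul_add_div_le_mul_iff (one_pos.trans_le hk₁₂) hS₀ (hk₂K.trans_lt hKS)).2 ?_
  calc
    Real.log S / (S - k₂) ≤ Real.log S / (S - K) :=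
      div_le_div_of_nonneg_left hlogS (sub_pos.2 hKS) (sub_le_sub_left hk₂K S)
    _ ≤ Real.log a / (a - K) := hgreatest.2 ⟨S, hS, rfl⟩
    _ ≤ B := hB

/-- Let `K ≥ 2` be an integer, `α > 1`, `S ≥ K^α`, `B ≥ α·log K/(K^α − K)`, and
`k₂, k₁₂` integers with `2 ≤ k₂, k₁₂ ≤ K`.  Then `t := k₁₂·(k₂·B + log S)/S` satisfies
`k₂·B/S ≤ t ≤ k₁₂·B`.  Moreover `B* := α·log K/(K^α − K)` is the supremum over all
`x ≥ K^α` of `log x/(x − K)`, so `B ≥ B*` is also necessary for the upper bound to hold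
uniformly over all `S ≥ K^α` (and all admissible `k₂, k₁₂`). -/
theorem choice_t_bounds (K : ℕ) (hK : 2 ≤ K) (α : ℝ) (hα : 1 < α)
    (S : ℝ) (hS : (K : ℝ) ^ α ≤ S)
    (B : ℝ) (hB : α * Real.log K / ((K : ℝ) ^ α - K) ≤ B)
    (k₂ k₁₂ : ℕ) (hk₂ : 2 ≤ k₂) (hk₂' : k₂ ≤ K) (hk₁₂ : 2 ≤ k₁₂) (hk₁₂' : k₁₂ ≤ K) :
    ((k₂ : ℝ) * B / S ≤ (k₁₂ : ℝ) * ((k₂ : ℝ) * B + Real.log S) / S ∧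
      (k₁₂ : ℝ) * ((k₂ : ℝ) * B + Real.log S) / S ≤ (k₁₂ : ℝ) * B) ∧
    IsLUB {y : ℝ | ∃ x : ℝ, (K : ℝ) ^ α ≤ x ∧ y = Real.log x / (x - K)}
      (α * Real.log K / ((K : ℝ) ^ α - K)) ∧
    (∀ B' : ℝ,
      (∀ S' : ℝ, (K : ℝ) ^ α ≤ S' →
        ∀ k₂' k₁₂' : ℕ, 2 ≤ k₂' → k₂' ≤ K → 2 ≤ k₁₂' → k₁₂' ≤ K →
          (k₁₂' : ℝ) * ((k₂' : ℝ) * B' + Real.log S') / S' ≤ (k₁₂' : ℝ) * B') →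
      α * Real.log K / ((K : ℝ) ^ α - K) ≤ B') := by
  have hK₁ : (1 : ℝ) < K := by exact_mod_cast hK
  have hK₀ : (0 : ℝ) < K := one_pos.trans hK₁
  rw [← Real.log_rpow hK₀] at hB ⊢
  obtain ⟨hbounds, hgreatest, hnecessary⟩ :=
    choice_t_bounds_general hK₁.le (Real.self_lt_rpow_of_one_lt hK₁ hα) hS hB k₂.cast_nonneg
      (Nat.cast_le.2 hk₂') (Nat.one_le_cast.2 (one_le_two.trans hk₁₂))
  exact ⟨hbounds, hgreatest.isLUB, fun B' hB' ↦
    hnecessary B' K hK₀ (hB' _ le_rfl K K hK le_rfl hK le_rfl)⟩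
end

section
/- Let K ≥ 2 be an integer and let B > 0, S > 1, c > 0 be real numbers satisfying B > (log K)/(2c) and c·(log S + 2B) > log K. Then the double sum Σ_{k₂=2}^{K} Σ_{k₁₂=2}^{K} K^{k₂+k₁₂} · exp(−c·k₁₂·(k₂B + log S)) is at most [K²/(1 − K·e^{−2cB})] · q²/(1 − q), where q := K·S^{−c}·e^{−2cB} (the hypotheses guarantee K·e^{−2cB} < 1 and q < 1). -/
/-!
Put `y = S ^ (-c)` and `z = exp (-(c * B))`, so that the summand is
`x ^ (k + l) * y ^ l * z ^ (k * l)` with `x = K` and `0 < z ≤ 1`. For fixed `k` the sum over `l`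
is geometric of ratio `x * y * z ^ k ≤ x * y * z ^ a`, where `a` is the least value of `k`; bounding
only the denominator in `r ^ b / (1 - r)` by this inequality leaves a geometric sum over `k` of
ratio `x * z ^ b`, where `b` is the least value of `l`.
-/

section OrderedField

variable {𝕜 : Type*} [Field 𝕜] [LinearOrder 𝕜] [IsStrictOrderedRing 𝕜]

theorem geom_sum_Ico_le_of_le {r q : 𝕜} (hr : 0 ≤ r) (hrq : r ≤ q) (hq : q < 1) (m n : ℕ) :
    ∑ i ∈ Finset.Ico m n, r ^ i ≤ r ^ m / (1 - q) := by
  have : 0 < 1 - q := sub_pos.mpr hq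
  calc ∑ i ∈ Finset.Ico m n, r ^ i
      ≤ r ^ m / (1 - r) := geom_sum_Ico_le_of_lt_one hr (hrq.trans_lt hq)
    _ ≤ r ^ m / (1 - q) := by gcongr

theorem sum_Ico_sum_Ico_pow_add_mul_pow_mul_le {x y z : 𝕜} (hx : 0 ≤ x) (hy : 0 ≤ y)
    (hz₀ : 0 ≤ z) (hz₁ : z ≤ 1) {a b : ℕ} (hr : x * z ^ b < 1) (hq : x * y * z ^ a < 1)
    (m n : ℕ) :
    ∑ k ∈ Finset.Ico a m, ∑ l ∈ Finset.Ico b n, x ^ (k + l) * y ^ l * z ^ (k * l) ≤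
      x ^ a / (1 - x * z ^ b) * ((x * y * z ^ a) ^ b / (1 - x * y * z ^ a)) := by
  have : 0 < 1 - x * y * z ^ a := sub_pos.mpr hq
  have inner_sum_le : ∀ k ∈ Finset.Ico a m,
      ∑ l ∈ Finset.Ico b n, (x * y * z ^ k) ^ l ≤ (x * y * z ^ k) ^ b / (1 - x * y * z ^ a) := by
    intro k hk
    have ratio_le : x * y * z ^ k ≤ x * y * z ^ a :=
      mul_le_mul_of_nonneg_left (pow_le_pow_of_le_one hz₀ hz₁ (Finset.mem_Ico.mp hk).1)
        (mul_nonneg hx hy)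
    exact geom_sum_Ico_le_of_le (by positivity) ratio_le hq b n
  calc ∑ k ∈ Finset.Ico a m, ∑ l ∈ Finset.Ico b n, x ^ (k + l) * y ^ l * z ^ (k * l)
      = ∑ k ∈ Finset.Ico a m, x ^ k * ∑ l ∈ Finset.Ico b n, (x * y * z ^ k) ^ l := by
        simp only [Finset.mul_sum, pow_add, mul_pow, pow_mul, mul_assoc]
    _ ≤ ∑ k ∈ Finset.Ico a m, x ^ k * ((x * y * z ^ k) ^ b / (1 - x * y * z ^ a)) := by
        gcongr with k hk
        exact inner_sum_le k hk
    _ = (x * y) ^ b / (1 - x * y * z ^ a) * ∑ k ∈ Finset.Ico a m, (x * z ^ b) ^ k := by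
        rw [Finset.mul_sum]
        refine Finset.sum_congr rfl fun k _ => ?_
        ring
    _ ≤ (x * y) ^ b / (1 - x * y * z ^ a) * ((x * z ^ b) ^ a / (1 - x * z ^ b)) := by
        gcongr
        exact geom_sum_Ico_le_of_lt_one (by positivity) hr
    _ = x ^ a / (1 - x * z ^ b) * ((x * y * z ^ a) ^ b / (1 - x * y * z ^ a)) := by
        ring

end OrderedField

theorem mul_exp_neg_lt_one_iff {x t : ℝ} (hx : 0 < x) :
    x * Real.exp (-t) < 1 ↔ Real.log x < t := by
  rw [Real.exp_neg, ← div_eq_mul_inv, div_lt_one (Real.exp_pos t), Real.log_lt_iff_lt_exp hx]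

theorem exp_neg_mul_add_log {S : ℝ} (hS : 0 < S) (B c : ℝ) (k l : ℕ) :
    Real.exp (-(c * l * (k * B + Real.log S))) =
      (S ^ (-c)) ^ l * Real.exp (-(c * B)) ^ (k * l) := by
  rw [Real.rpow_def_of_pos hS, ← Real.exp_nat_mul, ← Real.exp_nat_mul, ← Real.exp_add]
  push_cast
  ring_nf

theorem double_geometric_sum_bound_general {x B S c : ℝ} (hx : 0 < x) (hS : 0 < S)
    (hcB : 0 ≤ c * B) {a b : ℕ} (hr : Real.log x < b * c * B)
    (hq : Real.log x < c * (Real.log S + a * B)) (m n : ℕ) :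
    ∑ k ∈ Finset.Icc a m, ∑ l ∈ Finset.Icc b n,
        x ^ (k + l) * Real.exp (-(c * l * (k * B + Real.log S))) ≤
      x ^ a / (1 - x * Real.exp (-(b * c * B))) *
        ((x * S ^ (-c) * Real.exp (-(a * c * B))) ^ b /
          (1 - x * S ^ (-c) * Real.exp (-(a * c * B)))) := by
  have exp_pow (j : ℕ) : Real.exp (-(j * c * B)) = Real.exp (-(c * B)) ^ j := by
    rw [← Real.exp_nat_mul, mul_neg, mul_assoc]
  have hr' : x * Real.exp (-(b * c * B)) < 1 := (mul_exp_neg_lt_one_iff hx).mpr hr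
  have hq' : x * S ^ (-c) * Real.exp (-(a * c * B)) < 1 := by
    have hSc : 0 < S ^ (-c) := Real.rpow_pos_of_pos hS _
    rw [mul_exp_neg_lt_one_iff (mul_pos hx hSc), Real.log_mul hx.ne' hSc.ne', Real.log_rpow hS]
    linarith
  rw [exp_pow] at hr' hq'
  simp only [exp_neg_mul_add_log hS, exp_pow, ← mul_assoc, ← Finset.Ico_add_one_right_eq_Icc]
  exact sum_Ico_sum_Ico_pow_add_mul_pow_mul_le hx.le (Real.rpow_nonneg hS.le _)
    (Real.exp_nonneg _) (Real.exp_le_one_iff.mpr (neg_nonpos.mpr hcB)) hr' hq' _ _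

/-- Geometric-sum bound: for an integer `K ≥ 2` and reals `B > 0`, `S > 1`, `c > 0` with
`B > log K/(2c)` and `c·(log S + 2B) > log K`, the double sum
`Σ_{k₂=2}^{K} Σ_{k₁₂=2}^{K} K^{k₂+k₁₂}·exp(−c·k₁₂·(k₂B + log S))` is at most
`(K²/(1 − K·e^{−2cB})) · q²/(1 − q)` where `q := K·S^{−c}·e^{−2cB}`. -/
theorem double_geometric_sum_bound (K : ℕ) (hK : 2 ≤ K) (B S c : ℝ)
    (hB : 0 < B) (hS : 1 < S) (hc : 0 < c)
    (h1 : Real.log K / (2 * c) < B)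
    (h2 : Real.log K < c * (Real.log S + 2 * B)) :
    ∑ k₂ ∈ Finset.Icc 2 K, ∑ k₁₂ ∈ Finset.Icc 2 K,
        (K : ℝ) ^ (k₂ + k₁₂) *
          Real.exp (-(c * (k₁₂ : ℝ) * ((k₂ : ℝ) * B + Real.log S))) ≤
      ((K : ℝ) ^ 2 / (1 - (K : ℝ) * Real.exp (-(2 * c * B)))) *
        (((K : ℝ) * S ^ (-c) * Real.exp (-(2 * c * B))) ^ 2 /
          (1 - (K : ℝ) * S ^ (-c) * Real.exp (-(2 * c * B)))) := by
  have hr : Real.log K < 2 * c * B := by rwa [div_lt_iff₀' (by positivity)] at h1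
  exact_mod_cast double_geometric_sum_bound_general (a := 2) (b := 2) (by positivity)
    (zero_lt_one.trans hS) (mul_pos hc hB).le (mod_cast hr) (mod_cast h2) K K
end

section
/- Let Σ be an n×n real symmetric positive definite matrix, X₁ ∈ ℝⁿ nonzero, P an n×n permutation matrix, and X₁₂ := P X₁. Define ‖T‖² := ‖X₁₂‖²_{Σ⁻¹} − ⟨X₁₂, X₁⟩²_{Σ⁻¹}/‖X₁‖²_{Σ⁻¹}. Then λ_min(Σ⁻¹)·min_{α∈ℝ}‖P X₁ − α X₁‖₂² ≤ ‖T‖² ≤ λ_max(Σ⁻¹)·min_{α∈ℝ}‖P X₁ − α X₁‖₂², and the inner minimum admits the explicit form min_{α∈ℝ}‖P X₁ − α X₁‖₂² = ‖P X₁‖₂² − (X₁ᵀ P X₁)²/‖X₁‖₂². -/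
/-!
For a symmetric bilinear form `B` with `0 < B x x`, completing the square shows that
`B u u - (B u x)² / B x x` is the minimum over `α` of `B (u - α x) (u - α x)`. Hence a comparison of
two quadratic forms on all vectors passes to these minima. It is applied to the dot product and to
the form of `Σ⁻¹`, which the Loewner bounds `λ_min(Σ⁻¹) ≤ Σ⁻¹ ≤ λ_max(Σ⁻¹)` compare.
-/

open Matrix

noncomputable section

/-- Largest element of the real spectrum (set of eigenvalues) of a matrix. -/
def eigMax {n : ℕ} (A : Matrix (Fin n) (Fin n) ℝ) : ℝ := sSup (spectrum ℝ A)

/-- Smallest element of the real spectrum of a matrix. -/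
def eigMin {n : ℕ} (A : Matrix (Fin n) (Fin n) ℝ) : ℝ := sInf (spectrum ℝ A)

/-- The weighted inner product `⟨a, b⟩_{Σ⁻¹} := aᵀ Σ⁻¹ b`. -/
def wip {n : ℕ} (S : Matrix (Fin n) (Fin n) ℝ) (a b : Fin n → ℝ) : ℝ :=
  a ⬝ᵥ (S⁻¹).mulVec b

section LineResidual

variable {K V : Type*} [Field K] [AddCommGroup V] [Module K V]
  {B C : LinearMap.BilinForm K V} {x : V}

/-- The squared `B`-distance from `u` to the line spanned by `x`, for a symmetric bilinear form `B`
with `0 < B x x`. It is encoded by its closed form, so `B x x = 0` gives the junk value `B u u`. -/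
def lineResidual (B : LinearMap.BilinForm K V) (x u : V) : K :=
  B u u - B u x ^ 2 / B x x

lemma apply_sub_smul_self_eq_lineResidual_add (hB : B.IsSymm) (hx : B x x ≠ 0) (u : V) (a : K) :
    B (u - a • x) (u - a • x) = lineResidual B x u + B x x * (a - B u x / B x x) ^ 2 := by
  simp only [lineResidual, map_sub, map_smul, LinearMap.sub_apply, LinearMap.smul_apply,
    smul_eq_mul, hB.eq x u]
  field_simp
  ring

lemma apply_sub_div_smul_self_eq_lineResidual (hB : B.IsSymm) (hx : B x x ≠ 0) (u : V) :
    B (u - (B u x / B x x) • x) (u - (B u x / B x x) • x) = lineResidual B x u := by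
  rw [apply_sub_smul_self_eq_lineResidual_add hB hx, sub_self, zero_pow two_ne_zero, mul_zero,
    add_zero]

variable [LinearOrder K] [IsStrictOrderedRing K]

lemma lineResidual_le_apply_sub_smul_self (hB : B.IsSymm) (hx : 0 < B x x) (u : V) (a : K) :
    lineResidual B x u ≤ B (u - a • x) (u - a • x) := by
  rw [apply_sub_smul_self_eq_lineResidual_add hB hx.ne']
  exact le_add_of_nonneg_right (by positivity)

lemma isLeast_lineResidual (hB : B.IsSymm) (hx : 0 < B x x) (u : V) :
    IsLeast {y | ∃ a : K, y = B (u - a • x) (u - a • x)} (lineResidual B x u) := by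
  refine ⟨⟨_, (apply_sub_div_smul_self_eq_lineResidual hB hx.ne' u).symm⟩, ?_⟩
  rintro _ ⟨a, rfl⟩
  exact lineResidual_le_apply_sub_smul_self hB hx u a

lemma mul_lineResidual_le_mul_lineResidual (hB : B.IsSymm) (hC : C.IsSymm) (hBx : 0 < B x x)
    (hCx : C x x ≠ 0) {c d : K} (hc : 0 ≤ c) (h : ∀ v, c * B v v ≤ d * C v v) (u : V) :
    c * lineResidual B x u ≤ d * lineResidual C x u := by
  let v := u - (C u x / C x x) • x
  calc c * lineResidual B x u
    _ ≤ c * B v v :=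
      mul_le_mul_of_nonneg_left (lineResidual_le_apply_sub_smul_self hB hBx u _) hc
    _ ≤ d * C v v := h v
    _ = d * lineResidual C x u := by rw [apply_sub_div_smul_self_eq_lineResidual hC hCx]

end LineResidual

section Rayleigh

open scoped ComplexOrder MatrixOrder

variable {ι 𝕜 : Type*} [Fintype ι] [RCLike 𝕜] {A B : Matrix ι ι 𝕜}

lemma star_dotProduct_mulVec_le_of_le (h : A ≤ B) (v : ι → 𝕜) :
    star v ⬝ᵥ A *ᵥ v ≤ star v ⬝ᵥ B *ᵥ v := by
  simpa [sub_mulVec] using (Matrix.le_iff.mp h).dotProduct_mulVec_nonneg v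

variable [DecidableEq ι]

lemma star_dotProduct_algebraMap_mulVec (r : ℝ) (v : ι → 𝕜) :
    star v ⬝ᵥ algebraMap ℝ (Matrix ι ι 𝕜) r *ᵥ v = r • (star v ⬝ᵥ v) := by
  simp [Algebra.algebraMap_eq_smul_one, smul_mulVec]

lemma sInf_spectrum_smul_le_star_dotProduct_mulVec (hA : A.IsHermitian) (v : ι → 𝕜) :
    sInf (spectrum ℝ A) • (star v ⬝ᵥ v) ≤ star v ⬝ᵥ A *ᵥ v := by
  have hle : algebraMap ℝ _ (sInf (spectrum ℝ A)) ≤ A :=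
    algebraMap_le_of_le_spectrum (fun _ hr ↦ csInf_le A.finite_real_spectrum.bddBelow hr) hA
  simpa only [star_dotProduct_algebraMap_mulVec] using star_dotProduct_mulVec_le_of_le hle v

lemma star_dotProduct_mulVec_le_sSup_spectrum_smul (hA : A.IsHermitian) (v : ι → 𝕜) :
    star v ⬝ᵥ A *ᵥ v ≤ sSup (spectrum ℝ A) • (star v ⬝ᵥ v) := by
  have hle : A ≤ algebraMap ℝ _ (sSup (spectrum ℝ A)) :=
    le_algebraMap_of_spectrum_le (fun _ hr ↦ le_csSup A.finite_real_spectrum.bddAbove hr) hA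
  simpa only [star_dotProduct_algebraMap_mulVec] using star_dotProduct_mulVec_le_of_le hle v

lemma sInf_spectrum_nonneg_of_posSemidef (hA : A.PosSemidef) : 0 ≤ sInf (spectrum ℝ A) :=
  Real.sInf_nonneg fun _ hr ↦ spectrum_nonneg_of_nonneg hA.nonneg hr

end Rayleigh

theorem T_sq_spectral_sandwich_general {ι : Type*} [Fintype ι] [DecidableEq ι] {A : Matrix ι ι ℝ}
    (hA : A.PosSemidef) {x : ι → ℝ} (hx : 0 < x ⬝ᵥ A *ᵥ x) (u : ι → ℝ) :
    sInf (spectrum ℝ A) * (u ⬝ᵥ u - (x ⬝ᵥ u) ^ 2 / (x ⬝ᵥ x)) ≤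
        u ⬝ᵥ A *ᵥ u - (u ⬝ᵥ A *ᵥ x) ^ 2 / (x ⬝ᵥ A *ᵥ x) ∧
      u ⬝ᵥ A *ᵥ u - (u ⬝ᵥ A *ᵥ x) ^ 2 / (x ⬝ᵥ A *ᵥ x) ≤
        sSup (spectrum ℝ A) * (u ⬝ᵥ u - (x ⬝ᵥ u) ^ 2 / (x ⬝ᵥ x)) ∧
      IsLeast {y : ℝ | ∃ α : ℝ, y = (u - α • x) ⬝ᵥ (u - α • x)}
        (u ⬝ᵥ u - (x ⬝ᵥ u) ^ 2 / (x ⬝ᵥ x)) := by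
  let E : LinearMap.BilinForm ℝ (ι → ℝ) := toBilin' 1
  let Q : LinearMap.BilinForm ℝ (ι → ℝ) := toBilin' A
  have E_apply (v w : ι → ℝ) : E v w = v ⬝ᵥ w := by simp [E, toBilin'_apply']
  have Q_apply (v w : ι → ℝ) : Q v w = v ⬝ᵥ A *ᵥ w := toBilin'_apply' A v w
  have hE : E.IsSymm := isSymm_toBilin'_iff_isSymm.mpr isSymm_one
  have hQ : Q.IsSymm := isSymm_toBilin'_iff_isSymm.mpr (isHermitian_iff_isSymm.mp hA.isHermitian)
  have hEx : 0 < E x x := by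
    have hx0 : x ≠ 0 := by rintro rfl; simp at hx
    simpa [E_apply] using dotProduct_star_self_pos_iff.mpr hx0
  have hQx : 0 < Q x x := by rwa [Q_apply]
  have hlower := mul_lineResidual_le_mul_lineResidual hE hQ hEx hQx.ne'
    (sInf_spectrum_nonneg_of_posSemidef hA) (d := 1)
    (by simpa [E_apply, Q_apply] using sInf_spectrum_smul_le_star_dotProduct_mulVec hA.1) u
  have hupper := mul_lineResidual_le_mul_lineResidual hQ hE hQx hEx.ne' zero_le_one
    (by simpa [E_apply, Q_apply] using star_dotProduct_mulVec_le_sSup_spectrum_smul hA.1) u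
  have hleast := isLeast_lineResidual hE hEx u
  simp only [one_mul, lineResidual, E_apply, Q_apply, dotProduct_comm u x] at hlower hupper hleast
  exact ⟨hlower, hupper, hleast⟩

/-- Spectral sandwich for `‖T‖² := ‖X₁₂‖²_{Σ⁻¹} − ⟨X₁₂, X₁⟩²_{Σ⁻¹}/‖X₁‖²_{Σ⁻¹}` with
`X₁₂ := P X₁`:
`λ_min(Σ⁻¹)·min_α ‖P X₁ − α X₁‖₂² ≤ ‖T‖² ≤ λ_max(Σ⁻¹)·min_α ‖P X₁ − α X₁‖₂²`,
where the inner minimum equals `‖P X₁‖₂² − (X₁ᵀ P X₁)²/‖X₁‖₂²`. -/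
theorem T_sq_spectral_sandwich {n : ℕ} (S : Matrix (Fin n) (Fin n) ℝ) (hS : S.PosDef)
    (X₁ : Fin n → ℝ) (hX₁ : X₁ ≠ 0)
    (P : Matrix (Fin n) (Fin n) ℝ) (hP : ∃ σ : Equiv.Perm (Fin n), P = σ.permMatrix ℝ)
    (X₁₂ : Fin n → ℝ) (hX₁₂ : X₁₂ = P.mulVec X₁)
    (Tsq : ℝ) (hT : Tsq = wip S X₁₂ X₁₂ - (wip S X₁₂ X₁) ^ 2 / wip S X₁ X₁) :
    eigMin S⁻¹ * ((P.mulVec X₁ ⬝ᵥ P.mulVec X₁) - (X₁ ⬝ᵥ P.mulVec X₁) ^ 2 / (X₁ ⬝ᵥ X₁))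
        ≤ Tsq ∧
      Tsq ≤ eigMax S⁻¹ *
          ((P.mulVec X₁ ⬝ᵥ P.mulVec X₁) - (X₁ ⬝ᵥ P.mulVec X₁) ^ 2 / (X₁ ⬝ᵥ X₁)) ∧
      IsLeast {y : ℝ | ∃ α : ℝ,
          y = (P.mulVec X₁ - α • X₁) ⬝ᵥ (P.mulVec X₁ - α • X₁)}
        ((P.mulVec X₁ ⬝ᵥ P.mulVec X₁) - (X₁ ⬝ᵥ P.mulVec X₁) ^ 2 / (X₁ ⬝ᵥ X₁)) := by
  subst hX₁₂ hT
  exact T_sq_spectral_sandwich_general hS.inv.posSemidef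
    (hS.inv.dotProduct_mulVec_pos hX₁) (P.mulVec X₁)

end
end
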